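/- Let F be an algebraically closed field of prime characteristic p, let G be a finite group, and let V be a finite-dimensional representation of G over F (equivalently, a finite-dimensional FG-module). Then V is tensor-rich if and only if the only p-regular element g ∈ G that acts as the identity on V is the identity element e of G; that is, if and only if for every g ∈ G whose order is not divisible by p and which satisfies g·v = v for all v ∈ V, one has g = e. -/

import Mathlib

open CategoryTheory MonoidalCategory

/-- The `n`-th tensor power of a representation `X` of `G` over `k`, with the
diagonal `G`-action; `X^{⊗0}` is the trivial one-dimensional representation
(the monoidal unit of `Rep k G`). -/
noncomputable def repTensorPow (k G : Type) [CommRing k] [Monoid G] (X : Rep k G) :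
    ℕ → Rep k G
  | 0 => 𝟙_ (Rep k G)
  | n + 1 => repTensorPow k G X n ⊗ X

/-- `S` is a composition factor of the `R`-module `W`: there are submodules
`N ⊆ M ⊆ W` with `M/N ≅ S`. -/
def IsCompositionFactor (R : Type*) [Ring R] (S : Type*) [AddCommGroup S] [Module R S]
    (W : Type*) [AddCommGroup W] [Module R W] : Prop :=
  ∃ N M : Submodule R W, N ≤ M ∧
    Nonempty ((↥M ⧸ Submodule.comap M.subtype N) ≃ₗ[R] S)

/-- A representation `X ∈ Rep k G` is *tensor-rich* if every simple module over
the group algebra `k[G]` is a composition factor of some tensor power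
`X^{⊗n}`. -/
def TensorRich (k G : Type) [CommRing k] [Monoid G] (X : Rep k G) : Prop :=
  ∀ (S : Type) [AddCommGroup S] [Module (MonoidAlgebra k G) S],
    IsSimpleModule (MonoidAlgebra k G) S →
      ∃ n : ℕ,
        IsCompositionFactor (MonoidAlgebra k G) S ((repTensorPow k G X n).ρ.asModule)

/-!
Over an Artinian ring, a simple module `S` is a composition factor of some `W i` exactly when the
intersection of the annihilators of the `W i` annihilates `S`. Hence `V` is tensor-rich if and only
if the intersection of the annihilators of its tensor powers lies in the Jacobson radical of `F[G]`.

By Steinberg's argument that intersection is the kernel of `F[G] → F[ρ(G)]`: the matrix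
coefficients of the tensor powers are products of matrix coefficients of `V`, and distinct
operators give distinct, hence by Dedekind linearly independent, characters of the free monoid on
the matrix coefficients.

The kernel of `F[G] → F[ρ(G)]` lies in the radical if and only if `N = ker ρ` is a `p`-group.
If it does, then `g - 1` is nilpotent for `g ∈ N`, so that `g ^ p ^ n - 1 = (g - 1) ^ p ^ n = 0`
for some `n`. Conversely, a normal `p`-subgroup fixes a nonzero vector of each simple module, and
hence the whole module, in characteristic `p`.
-/

section CompositionFactor

variable {R : Type*} [Ring R] {S W : Type*} [AddCommGroup S] [Module R S]
  [AddCommGroup W] [Module R W]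

theorem isCompositionFactor_iff_exists_surjective :
    IsCompositionFactor R S W ↔
      ∃ (M : Submodule R W) (f : M →ₗ[R] S), Function.Surjective f := by
  constructor
  · rintro ⟨N, M, -, ⟨e⟩⟩
    exact ⟨M, e.toLinearMap ∘ₗ Submodule.mkQ _, e.surjective.comp (Submodule.mkQ_surjective _)⟩
  · rintro ⟨M, f, hf⟩
    have hker : ((LinearMap.ker f).map M.subtype).comap M.subtype = LinearMap.ker f :=
      Submodule.comap_map_eq_of_injective M.injective_subtype _
    exact ⟨(LinearMap.ker f).map M.subtype, M, Submodule.map_subtype_le _ _,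
      ⟨(Submodule.quotEquivOfEq _ _ hker).trans (f.quotKerEquivOfSurjective hf)⟩⟩

theorem IsCompositionFactor.annihilator_le (h : IsCompositionFactor R S W) :
    Module.annihilator R W ≤ Module.annihilator R S := by
  obtain ⟨M, f, hf⟩ := isCompositionFactor_iff_exists_surjective.1 h
  exact (M.subtype.annihilator_le_of_injective M.injective_subtype).trans
    (f.annihilator_le_of_surjective hf)

theorem isCompositionFactor_of_ker_le {P : Type*} [AddCommGroup P] [Module R P]
    {f : P →ₗ[R] S} (hf : Function.Surjective f) (φ : P →ₗ[R] W)
    (h : LinearMap.ker φ ≤ LinearMap.ker f) : IsCompositionFactor R S W := by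
  refine isCompositionFactor_iff_exists_surjective.2
    ⟨LinearMap.range φ, (LinearMap.ker φ).liftQ f h ∘ₗ φ.quotKerEquivRange.symm.toLinearMap, ?_⟩
  have hlift : Function.Surjective ((LinearMap.ker φ).liftQ f h) := by
    rw [← LinearMap.range_eq_top, Submodule.range_liftQ, LinearMap.range_eq_top.2 hf]
  exact hlift.comp φ.quotKerEquivRange.symm.surjective

-- Either `f` is still surjective on `ker (φ i)`, and the remaining maps are restricted to that
-- kernel, or `f` vanishes on `ker (φ i)` and hence factors through the image of `φ i`.
theorem exists_isCompositionFactor_of_inf_ker_le [IsSimpleModule R S] {ι : Type*}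
    {W : ι → Type*} [∀ i, AddCommGroup (W i)] [∀ i, Module R (W i)] {P : Type*}
    [AddCommGroup P] [Module R P] {f : P →ₗ[R] S} (hf : Function.Surjective f)
    (φ : ∀ i, P →ₗ[R] W i) (s : Finset ι)
    (h : s.inf (fun i => LinearMap.ker (φ i)) ≤ LinearMap.ker f) :
    ∃ i, IsCompositionFactor R S (W i) := by
  classical
  induction s using Finset.induction_on generalizing P with
  | empty =>
    have := IsSimpleModule.nontrivial R S
    obtain ⟨x, hx⟩ := exists_ne (0 : S)
    obtain ⟨y, rfl⟩ := hf x
    exact absurd (h (Submodule.mem_top : y ∈ ⊤)) hx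
  | insert i s _ ih =>
    rw [Finset.inf_insert] at h
    rcases LinearMap.surjective_or_eq_zero (f ∘ₗ (LinearMap.ker (φ i)).subtype) with hsurj | hzero
    · refine ih hsurj (fun j => φ j ∘ₗ (LinearMap.ker (φ i)).subtype) fun x hx => ?_
      exact h ⟨x.2, by simpa [Submodule.mem_finsetInf] using hx⟩
    · exact ⟨i, isCompositionFactor_of_ker_le hf (φ i)
        fun x hx => LinearMap.congr_fun hzero ⟨x, hx⟩⟩

theorem exists_isCompositionFactor_iff_iInf_annihilator_le [IsArtinianRing R]
    [IsSimpleModule R S] {ι : Type*} (W : ι → Type*) [∀ i, AddCommGroup (W i)]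
    [∀ i, Module R (W i)] :
    (∃ i, IsCompositionFactor R S (W i)) ↔
      ⨅ i, Module.annihilator R (W i) ≤ Module.annihilator R S := by
  refine ⟨fun ⟨i, hi⟩ => (iInf_le _ i).trans hi.annihilator_le, fun h => ?_⟩
  have := IsSimpleModule.nontrivial R S
  obtain ⟨x, hx⟩ := exists_ne (0 : S)
  let φ (w : Σ i, W i) : R →ₗ[R] W w.1 := LinearMap.toSpanSingleton R (W w.1) w.2
  obtain ⟨t, ht⟩ := Finset.exists_inf_le fun w => LinearMap.ker (φ w)
  have hker : t.inf (fun w => LinearMap.ker (φ w)) ≤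
      LinearMap.ker (LinearMap.toSpanSingleton R S x) := fun a ha =>
    Module.mem_annihilator.1
      (h ((Submodule.mem_iInf _).2 fun i => Module.mem_annihilator.2 fun w => ht ⟨i, w⟩ ha)) x
  obtain ⟨⟨i, _⟩, hi⟩ := exists_isCompositionFactor_of_inf_ker_le
    (IsSimpleModule.toSpanSingleton_surjective R hx) φ t hker
  exact ⟨i, hi⟩

theorem forall_isSimpleModule_le_annihilator_iff.{u} {R : Type u} [Ring R] {I : Ideal R} :
    (∀ (S : Type u) [AddCommGroup S] [Module R S], IsSimpleModule R S →
      I ≤ Module.annihilator R S) ↔ I ≤ Ring.jacobson R := by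
  rw [Ring.jacobson_eq_sInf_isMaximal]
  constructor
  · refine fun h => le_sInf fun m hm a ha => ?_
    have hsimple : IsSimpleModule R (R ⧸ m) :=
      isSimpleModule_iff_isCoatom.2 (Ideal.isMaximal_def.1 hm)
    have := Module.mem_annihilator.1 (h _ hsimple ha) (Submodule.Quotient.mk 1)
    rwa [← Submodule.Quotient.mk_smul, Submodule.Quotient.mk_eq_zero, smul_eq_mul, mul_one] at this
  · refine fun h S _ _ _ a ha => Module.mem_annihilator.2 fun x => ?_
    obtain rfl | hx := eq_or_ne x 0
    · exact smul_zero a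
    · exact (h.trans (sInf_le (IsSimpleModule.ker_toSpanSingleton_isMaximal R hx))) ha

end CompositionFactor

section PGroup

theorem isPGroup_iff_forall_not_dvd_orderOf {p : ℕ} [Fact p.Prime] {P : Type*} [Group P]
    (hP : IsMulTorsion P) :
    IsPGroup p P ↔ ∀ g : P, ¬ p ∣ orderOf g → g = 1 := by
  have hp : p.Prime := Fact.out
  constructor
  · intro h g hg
    have hcop : (orderOf g).Coprime (orderOf g) :=
      h.orderOf_coprime (hp.coprime_iff_not_dvd.2 hg) g
    rwa [Nat.coprime_self, orderOf_eq_one_iff] at hcop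
  · intro h g
    obtain ⟨k, m, hm, hk⟩ := Nat.exists_eq_pow_mul_and_not_dvd (hP g).orderOf_pos.ne' p hp.ne_one
    refine ⟨k, h _ ?_⟩
    rwa [orderOf_pow_of_dvd (pow_ne_zero k hp.ne_zero) (hk ▸ dvd_mul_right _ _), hk,
      Nat.mul_div_cancel_left _ (pow_pos hp.pos k)]

-- The additive subgroup generated by an orbit is finite of order divisible by `p`, so the
-- fixed points in it, whose number is then also divisible by `p`, cannot consist of `0` alone.
theorem exists_ne_zero_mem_fixedPoints_of_isPGroup {p : ℕ} [Fact p.Prime] {P S : Type*}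
    [Group P] [Finite P] [AddCommGroup S] [DistribMulAction P S] [Nontrivial S]
    (hP : IsPGroup p P) (hS : ∀ s : S, p • s = 0) :
    ∃ s ∈ MulAction.fixedPoints P S, s ≠ 0 := by
  obtain ⟨s₀, hs₀⟩ := exists_ne (0 : S)
  let B : AddSubgroup S := AddSubgroup.closure (MulAction.orbit P s₀)
  have hs₀B : s₀ ∈ B := AddSubgroup.subset_closure (MulAction.mem_orbit_self s₀)
  have hsmul (g : P) {b : S} (hb : b ∈ B) : g • b ∈ B := by
    suffices B ≤ B.comap (DistribSMul.toAddMonoidHom S g) from this hb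
    refine (AddSubgroup.closure_le _).2 fun x hx => AddSubgroup.subset_closure ?_
    exact MulAction.mem_orbit_of_mem_orbit g hx
  have htors (b : B) : p • b = 0 := Subtype.ext (hS b)
  have hfg : AddGroup.FG B := (AddGroup.fg_iff_addSubgroup_fg B).2
    ((AddSubgroup.fg_iff B).2 ⟨_, rfl, Set.finite_range _⟩)
  have hfin : Finite B := AddCommGroup.finite_of_fg_isAddTorsion B fun b =>
    isOfFinAddOrder_iff_nsmul_eq_zero.2 ⟨p, (Fact.out : p.Prime).pos, htors b⟩
  have hcard : p ∣ Nat.card B := by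
    rw [← addOrderOf_eq_prime (htors ⟨s₀, hs₀B⟩) fun h => hs₀ (congrArg Subtype.val h)]
    exact addOrderOf_dvd_natCard _
  let _ : MulAction P B :=
    SubMulAction.mulAction' (⟨B, fun g _ hb => hsmul g hb⟩ : SubMulAction P S)
  obtain ⟨b, hb, hne⟩ := hP.exists_fixed_point_of_prime_dvd_card_of_fixed_point B hcard
    (a := 0) fun g => Subtype.ext (smul_zero g)
  exact ⟨b, fun g => congrArg Subtype.val (hb g), fun h => hne (Subtype.ext h.symm)⟩

end PGroup

section MonoidAlgebra

open MonoidAlgebra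

theorem isArtinianRing_monoidAlgebra (k G : Type*) [Ring k] [IsArtinianRing k] [Monoid G]
    [Finite G] : IsArtinianRing (MonoidAlgebra k G) :=
  have : Module.Finite k (MonoidAlgebra k G) :=
    Module.Finite.equiv (MonoidAlgebra.coeffLinearEquiv k).symm
  isArtinian_of_tower k inferInstance

theorem charP_monoidAlgebra (k G : Type*) [Ring k] [Monoid G] (p : ℕ) [CharP k p] :
    CharP (MonoidAlgebra k G) p :=
  charP_of_injective_ringHom (f := singleOneRingHom) single_right_injective p

theorem ker_mapDomainRingHom_le {k G M : Type*} [Ring k] [Monoid G] [Monoid M] (f : G →* M)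
    {I : Ideal (MonoidAlgebra k G)} (h : ∀ g g', f g = f g' → of k G g - of k G g' ∈ I) :
    RingHom.ker (mapDomainRingHom k f) ≤ I := by
  have hsection (a : MonoidAlgebra k G) :
      a - mapDomain (Function.invFun f) (mapDomain f a) ∈ I := by
    induction a using MonoidAlgebra.induction_linear with
    | zero => simp
    | add a b ha hb => simpa [mapDomain_add, add_sub_add_comm] using I.add_mem ha hb
    | single g r =>
      have hg : f g = f (Function.invFun f (f g)) := (Function.invFun_eq ⟨g, rfl⟩).symm
      simpa [mul_sub, single_mul_single] using I.mul_mem_left (single 1 r) (h _ _ hg)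
  intro a ha
  have ha : mapDomain f a = 0 := ha
  simpa [ha] using hsection a

theorem of_smul_eq_self_of_isPGroup {k G S : Type*} [Ring k] [Group G] {p : ℕ}
    [Fact p.Prime] [CharP k p] [AddCommGroup S] [Module (MonoidAlgebra k G) S]
    [IsSimpleModule (MonoidAlgebra k G) S] {N : Subgroup G} [N.Normal] [Finite N]
    (hN : IsPGroup p N) {n : G} (hn : n ∈ N) (s : S) : of k G n • s = s := by
  let _ : DistribMulAction N S := DistribMulAction.compHom S ((of k G).comp N.subtype)
  let fixed : Submodule (MonoidAlgebra k G) S :=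
    { carrier := MulAction.fixedPoints N S
      zero_mem' := fun n => smul_zero n
      add_mem' := fun ha hb n => by rw [smul_add, ha n, hb n]
      smul_mem' := fun a s hs n => by
        change of k G n • a • s = a • s
        induction a using MonoidAlgebra.induction_linear with
        | zero => simp
        | add a b ha hb => rw [add_smul, smul_add, ha, hb]
        | single g r =>
          have hconj : of k G (g⁻¹ * n * g) • s = s :=
            hs ⟨g⁻¹ * n * g, by simpa using ‹N.Normal›.conj_mem n n.2 g⁻¹⟩
          have hcomm : of k G n * single g r = single g r * of k G (g⁻¹ * n * g) := by
            simp [single_mul_single, mul_assoc]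
          rw [← mul_smul, hcomm, mul_smul, hconj] }
  have := IsSimpleModule.nontrivial (MonoidAlgebra k G) S
  have := charP_monoidAlgebra k G p
  have hchar (s : S) : p • s = 0 := by
    rw [← Nat.cast_smul_eq_nsmul (MonoidAlgebra k G), CharP.cast_eq_zero, zero_smul]
  obtain ⟨s₁, hs₁, hne⟩ := exists_ne_zero_mem_fixedPoints_of_isPGroup hN hchar
  have hfixed : fixed = ⊤ := (eq_bot_or_eq_top fixed).resolve_left
    fun hbot => hne ((Submodule.mem_bot _).1 (hbot ▸ (show s₁ ∈ fixed from hs₁)))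
  exact (hfixed ▸ Submodule.mem_top : s ∈ fixed) ⟨n, hn⟩

theorem exists_pow_eq_one_of_isNilpotent_of_sub_one {k G : Type*} [Ring k] [Monoid G] {p : ℕ}
    [Fact p.Prime] [CharP k p] {g : G} (h : IsNilpotent (of k G g - 1)) :
    ∃ n, g ^ p ^ n = 1 := by
  obtain ⟨n, hn⟩ := h
  have := charP_monoidAlgebra k G p
  have := CharP.nontrivial_of_char_ne_one (R := k) (Fact.out : p.Prime).ne_one
  have hpow : (of k G g - 1) ^ p ^ n = 0 :=
    pow_eq_zero_of_le (Nat.lt_pow_self (Fact.out : p.Prime).one_lt).le hn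
  rw [sub_pow_char_pow_of_commute _ _ (Commute.one_right _), one_pow, sub_eq_zero,
    ← map_pow, ← map_one (of k G)] at hpow
  exact ⟨n, of_injective hpow⟩

theorem ker_mapDomainRingHom_le_jacobson_iff {k G M : Type*} [Ring k] [IsArtinianRing k]
    [Group G] [Finite G] [Monoid M] {p : ℕ} [Fact p.Prime] [CharP k p] (f : G →* M) :
    RingHom.ker (mapDomainRingHom k f) ≤ Ring.jacobson (MonoidAlgebra k G) ↔
      IsPGroup p f.ker := by
  have := isArtinianRing_monoidAlgebra k G
  constructor
  · rintro h ⟨g, hg⟩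
    have hmem : of k G g - 1 ∈ RingHom.ker (mapDomainRingHom k f) := by
      rw [RingHom.mem_ker, map_sub, map_one, sub_eq_zero]
      exact mapDomain_single.trans (congrArg (single · 1) hg)
    obtain ⟨m, hm⟩ := IsSemiprimaryRing.isNilpotent (R := MonoidAlgebra k G)
    have hnil : (of k G g - 1) ^ m = 0 := by simpa [hm] using Ideal.pow_mem_pow (h hmem) m
    obtain ⟨n, hn⟩ := exists_pow_eq_one_of_isNilpotent_of_sub_one ⟨m, hnil⟩
    exact ⟨n, Subtype.ext hn⟩
  · intro h
    refine forall_isSimpleModule_le_annihilator_iff.1 fun S _ _ _ =>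
      ker_mapDomainRingHom_le f fun g g' hgg' => Module.mem_annihilator.2 fun s => ?_
    have hfix : of k G (g'⁻¹ * g) • s = s := of_smul_eq_self_of_isPGroup h (f.eq_iff.1 hgg') s
    rw [sub_smul, sub_eq_zero]
    nth_rw 2 [← hfix]
    rw [← mul_smul, ← map_mul, mul_inv_cancel_left]

end MonoidAlgebra

section MatrixCoefficients

variable {k V : Type*} [CommRing k] [AddCommGroup V] [Module k V]

/-- The monoid homomorphism sending a word `(φ₁, v₁) ⋯ (φₙ, vₙ)` of functionals and vectors to
the product `φ₁ (T v₁) ⋯ φₙ (T vₙ)` of matrix coefficients of `T`, that is, to a matrix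
coefficient of the tensor power `T^{⊗n}`. Indexing by words makes multiplicativity in the word
available for Dedekind's linear independence of characters. -/
noncomputable def matrixCoeffHom (T : Module.End k V) :
    FreeMonoid (Module.Dual k V × V) →* k :=
  FreeMonoid.lift fun x => x.1 (T x.2)

variable [Module.Projective k V]

theorem matrixCoeffHom_injective : Function.Injective (matrixCoeffHom (k := k) (V := V)) := by
  intro T T' h
  ext v
  rw [← sub_eq_zero, ← Module.forall_dual_apply_eq_zero_iff k]
  intro φ
  simpa [matrixCoeffHom, sub_eq_zero] using DFunLike.congr_fun h (FreeMonoid.of (φ, v))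

theorem linearIndependent_matrixCoeffHom [IsDomain k] :
    LinearIndependent k fun (T : Module.End k V) w => matrixCoeffHom T w :=
  (linearIndependent_monoidHom _ k).comp _ matrixCoeffHom_injective

end MatrixCoefficients

theorem mem_annihilator_asModule_iff {k G V : Type*} [CommRing k] [Monoid G] [AddCommGroup V]
    [Module k V] (ρ : Representation k G V) {a : MonoidAlgebra k G} :
    a ∈ Module.annihilator (MonoidAlgebra k G) ρ.asModule ↔ ρ.asAlgebraHom a = 0 :=
  Module.mem_annihilator.trans (LinearMap.ext_iff (f := ρ.asAlgebraHom a) (g := 0)).symm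

section TensorPower

variable {k G : Type} [CommRing k] [Monoid G] (V : Rep k G)

theorem exists_repTensorPow_coeff_eq_matrixCoeffHom (w : FreeMonoid (Module.Dual k V × V)) :
    ∃ (n : ℕ) (v : repTensorPow k G V n) (φ : Module.Dual k (repTensorPow k G V n)),
      ∀ g, φ ((repTensorPow k G V n).ρ g v) = matrixCoeffHom (V.ρ g) w := by
  induction w using FreeMonoid.inductionOn' with
  | one => exact ⟨0, (1 : k), (LinearMap.id : k →ₗ[k] k), fun g => (map_one _).symm⟩
  | of_mul x w ih =>
    obtain ⟨n, v, φ, h⟩ := ih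
    refine ⟨n + 1, (v ⊗ₜ[k] x.2 : TensorProduct k (repTensorPow k G V n) V),
      (LinearMap.mul' k k ∘ₗ TensorProduct.map φ x.1 :
        TensorProduct k (repTensorPow k G V n) V →ₗ[k] k), fun g => ?_⟩
    calc φ ((repTensorPow k G V n).ρ g v) * x.1 (V.ρ g x.2)
        = matrixCoeffHom (V.ρ g) (FreeMonoid.of x) * matrixCoeffHom (V.ρ g) w := by
          rw [h, mul_comm]; rfl
      _ = matrixCoeffHom (V.ρ g) (FreeMonoid.of x * w) := (map_mul _ _ _).symm

theorem repTensorPow_ρ_congr {g g' : G} (h : V.ρ g = V.ρ g') (n : ℕ) :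
    (repTensorPow k G V n).ρ g = (repTensorPow k G V n).ρ g' := by
  induction n with
  | zero => rfl
  | succ n ih => exact congrArg₂ TensorProduct.map ih h

theorem sum_mul_matrixCoeffHom_eq_zero {a : MonoidAlgebra k G}
    (ha : ∀ n, (repTensorPow k G V n).ρ.asAlgebraHom a = 0)
    (w : FreeMonoid (Module.Dual k V × V)) :
    a.coeff.sum (fun g r => r * matrixCoeffHom (V.ρ g) w) = 0 := by
  obtain ⟨n, v, φ, h⟩ := exists_repTensorPow_coeff_eq_matrixCoeffHom V w
  have hφ : φ ((repTensorPow k G V n).ρ.asAlgebraHom a v) = 0 := by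
    rw [ha n, LinearMap.zero_apply, map_zero]
  rw [Representation.asAlgebraHom_def, MonoidAlgebra.lift_apply] at hφ
  simpa only [Finsupp.sum, LinearMap.sum_apply, map_sum, LinearMap.smul_apply, map_smul, h,
    smul_eq_mul] using hφ

theorem iInf_annihilator_repTensorPow [IsDomain k] [Module.Projective k V] :
    ⨅ n, Module.annihilator (MonoidAlgebra k G) (repTensorPow k G V n).ρ.asModule =
      RingHom.ker (MonoidAlgebra.mapDomainRingHom k V.ρ) := by
  apply le_antisymm
  · intro a ha
    have hann n : (repTensorPow k G V n).ρ.asAlgebraHom a = 0 :=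
      (mem_annihilator_asModule_iff _).1 ((Submodule.mem_iInf _).1 ha n)
    have hindep := linearIndependent_matrixCoeffHom (k := k) (V := V)
    have hmap : a.coeff.mapDomain V.ρ = 0 := by
      refine linearIndependent_iff.1 hindep _ ?_
      rw [Finsupp.linearCombination_mapDomain, Finsupp.linearCombination_apply]
      ext w
      simpa [Finsupp.sum] using sum_mul_matrixCoeffHom_eq_zero V hann w
    exact MonoidAlgebra.coeff_injective hmap
  · refine le_iInf fun n => ker_mapDomainRingHom_le _ fun g g' h =>
      (mem_annihilator_asModule_iff _).2 ?_
    rw [map_sub, Representation.asAlgebraHom_of, Representation.asAlgebraHom_of,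
      repTensorPow_ρ_congr V h, sub_self]

end TensorPower

theorem tensorRich_iff_isPGroup_ker {F G : Type} [Field F] {p : ℕ} [Fact p.Prime] [CharP F p]
    [Group G] [Finite G] (V : Rep F G) : TensorRich F G V ↔ IsPGroup p V.ρ.ker := by
  have := isArtinianRing_monoidAlgebra F G
  rw [← ker_mapDomainRingHom_le_jacobson_iff (k := F), ← iInf_annihilator_repTensorPow,
    ← forall_isSimpleModule_le_annihilator_iff]
  refine forall₄_congr fun S _ _ _ => ?_
  exact exists_isCompositionFactor_iff_iInf_annihilator_le _

theorem stmt15_general (F : Type) [Field F] (p : ℕ) [Fact p.Prime] [CharP F p]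
    (G : Type) [Group G] [Finite G] (V : Rep F G) :
    TensorRich F G V ↔
      ∀ g : G, ¬ p ∣ orderOf g → (∀ v : V, V.ρ g v = v) → g = 1 := by
  rw [tensorRich_iff_isPGroup_ker (p := p),
    isPGroup_iff_forall_not_dvd_orderOf isMulTorsion_of_finite]
  simp only [Subtype.forall, MonoidHom.mem_ker, LinearMap.ext_iff, Module.End.one_apply,
    Subgroup.orderOf_mk, Subgroup.mk_eq_one]
  exact forall_congr' fun g => imp.swap

/-- Brauer's theorem, Theorem 7.3 of the paper. Over an
algebraically closed field `F` of prime characteristic `p`, a finite-dimensional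
representation `V` of a finite group `G` is tensor-rich if and only if the only
`p`-regular element of `G` acting as the identity on `V` is the identity. -/
theorem stmt15 (F : Type) [Field F] [IsAlgClosed F] (p : ℕ) [Fact p.Prime] [CharP F p]
    (G : Type) [Group G] [Fintype G]
    (V : Rep F G) [FiniteDimensional F V] :
    TensorRich F G V ↔
      ∀ g : G, ¬ p ∣ orderOf g → (∀ v : V, V.ρ g v = v) → g = 1 :=
  stmt15_general F p G V
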